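/- If (α,β,γ) ∈ R₂, (G,w) ∈ Tri(α,β,γ), and for all a₁, a₂ ∈ A the neighbourhoods of a₁ and a₂ in class C coincide (i.e. Γ_C(a₁) = Γ_C(a₂)), then (G,w) is not extremal. -/

import Mathlib

/-!
Write `p = 1 - α`. If all vertices of `A` share one neighbourhood `N ⊆ C`, then the triangle
density is at least `α + βγ - 1`: for indicators `X = [ab]`, `N = [c ∈ N]`, `Z = [bc]`, the
quantity `XNZ - Z - NX + 1` is nonnegative, and averaging it over the weighted triples gives
exactly `t - α - βγ + 1` (`le_triDensity_of_common_nbr`).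

On the other hand, in `R₂` the graph `H₇`, with its classes cyclically relabelled so that the class
with three vertices is `A`, can be weighted to have densities `α, β, γ` and triangle density
`2(α - 1 + s)` with `s = √(βγp)` (`exists_H7_weighting`). The class weights are well defined
because of the inequalities in `R`, except for the middle vertex of `A`, whose weight is a positive
multiple of `α - β - γ + 2s`; this is nonnegative exactly because `Δ ≤ 0`. The difference of the two
densities is `(α + βγ - 1) - 2(α - 1 + s) = (√(βγ) - √p)²`, which is positive because `βγ > p`.
-/

open Finset

/-- A tripartite graph on `n` vertices: each vertex is assigned one of
three classes, adjacency is symmetric, and edges only join distinct classes. -/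
structure TriGraph (n : ℕ) where
  cls : Fin n → Fin 3
  adj : Fin n → Fin n → Bool
  symm : ∀ u v, adj u v = adj v u
  tripart : ∀ u v, adj u v = true → cls u ≠ cls v

/-- The set of vertices in class `i`. -/
def classSet {n : ℕ} (G : TriGraph n) (i : Fin 3) : Finset (Fin n) :=
  Finset.univ.filter (fun v => G.cls v = i)

/-- A weighting of a tripartite graph: weights in `[0,1]` summing to `1`
on each class. -/
structure Weighting {n : ℕ} (G : TriGraph n) where
  w : Fin n → ℝ
  nonneg : ∀ v, 0 ≤ w v
  le_one : ∀ v, w v ≤ 1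
  sum_one : ∀ i : Fin 3, ∑ v ∈ classSet G i, w v = 1

/-- Weighted edge density between classes `i` and `j`. -/
noncomputable def edgeDensity {n : ℕ} (G : TriGraph n) (w : Fin n → ℝ) (i j : Fin 3) : ℝ :=
  ∑ x ∈ classSet G i, ∑ y ∈ classSet G j, if G.adj x y then w x * w y else 0

/-- Weighted triangle density. -/
noncomputable def triDensity {n : ℕ} (G : TriGraph n) (w : Fin n → ℝ) : ℝ :=
  ∑ a ∈ classSet G 0, ∑ b ∈ classSet G 1, ∑ c ∈ classSet G 2,
    if G.adj a b && G.adj a c && G.adj b c then w a * w b * w c else 0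

/-- `(G,W) ∈ Tri(α,β,γ)`: the three edge densities are `α` (between B and C),
`β` (between A and C) and `γ` (between A and B), where A, B, C are classes 0, 1, 2. -/
def InTri {n : ℕ} (G : TriGraph n) (W : Weighting G) (α β γ : ℝ) : Prop :=
  edgeDensity G W.w 1 2 = α ∧ edgeDensity G W.w 0 2 = β ∧ edgeDensity G W.w 0 1 = γ

/-- The minimal triangle density over all weighted tripartite graphs with
edge densities `α, β, γ`. -/
noncomputable def Tmin (α β γ : ℝ) : ℝ :=
  sInf { t : ℝ | ∃ (n : ℕ) (G : TriGraph n) (W : Weighting G),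
    InTri G W α β γ ∧ triDensity G W.w = t }

/-- `(G,W)` is extremal: it lies in `Tri(α,β,γ)` and attains `Tmin`. -/
def Extremal {n : ℕ} (G : TriGraph n) (W : Weighting G) (α β γ : ℝ) : Prop :=
  InTri G W α β γ ∧ triDensity G W.w = Tmin α β γ

/-- `(G,W)` is vertex minimal: no member of `Tri(α,β,γ)` with the same triangle
density has fewer vertices. -/
def VertexMinimal {n : ℕ} (G : TriGraph n) (W : Weighting G) (α β γ : ℝ) : Prop :=
  InTri G W α β γ ∧
    ¬ ∃ (m : ℕ) (G' : TriGraph m) (W' : Weighting G'),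
        m < n ∧ InTri G' W' α β γ ∧ triDensity G' W'.w = triDensity G W.w

/-- Membership in the cube `[0,1]³`. -/
def inCube (α β γ : ℝ) : Prop :=
  α ∈ Set.Icc (0:ℝ) 1 ∧ β ∈ Set.Icc (0:ℝ) 1 ∧ γ ∈ Set.Icc (0:ℝ) 1

/-- The region `R`. -/
def inR (α β γ : ℝ) : Prop :=
  inCube α β γ ∧ 1 < α * β + γ ∧ 1 < α * γ + β ∧ 1 < β * γ + α

/-- The discriminant `Δ(α,β,γ)`. -/
noncomputable def Delta (α β γ : ℝ) : ℝ :=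
  α^2 + β^2 + γ^2 - 2*α*β - 2*α*γ - 2*β*γ + 4*α*β*γ

/-- The region `R₁ = {(α,β,γ) ∈ R : Δ ≥ 0}`. -/
def inR1 (α β γ : ℝ) : Prop := inR α β γ ∧ 0 ≤ Delta α β γ

/-- The region `R₂ = R \ R₁`. -/
def inR2 (α β γ : ℝ) : Prop := inR α β γ ∧ Delta α β γ < 0

/-- Adjacency of a complete tripartite graph minus a given list of (non-)edges. -/
def mkAdj {n : ℕ} (cls : Fin n → Fin 3) (nonEdges : List (ℕ × ℕ)) : Fin n → Fin n → Bool :=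
  fun u v => (cls u != cls v) &&
    !(nonEdges.contains (u.val, v.val) || nonEdges.contains (v.val, u.val))

/-- `H₆`: classes A = {0,1}, B = {2,3}, C = {4,5} (vertices aᵢ, bᵢ, cᵢ in order);
the complete tripartite graph `K_{2,2,2}` minus the edges a₂b₁, b₂c₁, a₁c₂. -/
def H6 : TriGraph 6 where
  cls := ![0,0,1,1,2,2]
  adj := mkAdj ![0,0,1,1,2,2] [(1,2),(3,4),(0,5)]
  symm := by decide
  tripart := by decide

/-- `H₇`: classes A = {0,1}, B = {2,3}, C = {4,5,6};
`K_{2,2,3}` minus the edges a₂b₁, a₁c₂, a₁c₃, b₂c₁, b₂c₂. -/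
def H7 : TriGraph 7 where
  cls := ![0,0,1,1,2,2,2]
  adj := mkAdj ![0,0,1,1,2,2,2] [(1,2),(0,5),(0,6),(3,4),(3,5)]
  symm := by decide
  tripart := by decide

/-- `H₇′`: classes A = {0,1}, B = {2,3,4}, C = {5,6};
`K_{2,3,2}` minus the edges a₂b₁, a₁c₂, b₂c₁, b₂c₂, b₃c₁. -/
def H7' : TriGraph 7 where
  cls := ![0,0,1,1,1,2,2]
  adj := mkAdj ![0,0,1,1,1,2,2] [(1,2),(0,6),(3,5),(3,6),(4,5)]
  symm := by decide
  tripart := by decide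

/-- `H₉`: classes A = {0,1,2}, B = {3,4,5}, C = {6,7,8};
`K_{3,3,3}` minus the 9-cycle a₁c₂, c₂b₂, b₂c₁, c₁b₃, b₃a₂, a₂b₁, b₁a₃, a₃c₃, c₃a₁. -/
def H9 : TriGraph 9 where
  cls := ![0,0,0,1,1,1,2,2,2]
  adj := mkAdj ![0,0,0,1,1,1,2,2,2] [(0,7),(4,7),(4,6),(5,6),(1,5),(1,3),(2,3),(2,8),(0,8)]
  symm := by decide
  tripart := by decide

/-- `F₆`: classes A = {0,1}, B = {2,3}, C = {4,5};
`K_{2,2,2}` minus the edges a₁b₁, a₁c₁, b₁c₁, a₂c₂, b₂c₂. -/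
def F6 : TriGraph 6 where
  cls := ![0,0,1,1,2,2]
  adj := mkAdj ![0,0,1,1,2,2] [(0,2),(0,4),(2,4),(1,5),(3,5)]
  symm := by decide
  tripart := by decide

/-- Strong isomorphism of tripartite graphs: a graph isomorphism mapping
vertex classes onto vertex classes. -/
def StronglyIso {n m : ℕ} (G : TriGraph n) (H : TriGraph m) : Prop :=
  ∃ (e : Fin n ≃ Fin m) (σ : Fin 3 ≃ Fin 3),
    (∀ u v, H.adj (e u) (e v) = G.adj u v) ∧ ∀ v, H.cls (e v) = σ (G.cls v)

/-- A double weighting: a function `p` assigning each edge a value in `(0,1]`. -/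
structure DWeight {n : ℕ} (G : TriGraph n) where
  p : Fin n → Fin n → ℝ
  symm : ∀ u v, p u v = p v u
  pos : ∀ u v, G.adj u v = true → 0 < p u v
  le_one : ∀ u v, G.adj u v = true → p u v ≤ 1

/-- Edge density of a doubly-weighted tripartite graph. -/
noncomputable def dEdgeDensity {n : ℕ} (G : TriGraph n) (w : Fin n → ℝ)
    (p : Fin n → Fin n → ℝ) (i j : Fin 3) : ℝ :=
  ∑ x ∈ classSet G i, ∑ y ∈ classSet G j, if G.adj x y then w x * w y * p x y else 0

/-- Triangle density of a doubly-weighted tripartite graph. -/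
noncomputable def dTriDensity {n : ℕ} (G : TriGraph n) (w : Fin n → ℝ)
    (p : Fin n → Fin n → ℝ) : ℝ :=
  ∑ a ∈ classSet G 0, ∑ b ∈ classSet G 1, ∑ c ∈ classSet G 2,
    if G.adj a b && G.adj a c && G.adj b c then
      w a * w b * w c * p a b * p a c * p b c
    else 0

/-- `C_{ab}`: the vertices of class C (class 2) adjacent to both `a` and `b`. -/
def Cset {n : ℕ} (G : TriGraph n) (a b : Fin n) : Finset (Fin n) :=
  Finset.univ.filter (fun c => G.cls c = 2 ∧ G.adj a c = true ∧ G.adj b c = true)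

/-- Edge density of a simple (unweighted) tripartite graph between classes `i` and `j`. -/
noncomputable def simpleEdgeDensity {n : ℕ} (G : TriGraph n) (i j : Fin 3) : ℝ :=
  (∑ x ∈ classSet G i, ∑ y ∈ classSet G j, if G.adj x y then (1:ℝ) else 0) /
    ((classSet G i).card * (classSet G j).card)

/-- Triangle density of a simple (unweighted) tripartite graph. -/
noncomputable def simpleTriDensity {n : ℕ} (G : TriGraph n) : ℝ :=
  (∑ a ∈ classSet G 0, ∑ b ∈ classSet G 1, ∑ c ∈ classSet G 2,
    if G.adj a b && G.adj a c && G.adj b c then (1:ℝ) else 0) /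
    ((classSet G 0).card * (classSet G 1).card * (classSet G 2).card)

/-- `H₇` with its classes relabelled cyclically: B = {0,1}, C = {2,3}, A = {4,5,6}. -/
def H7cyc : TriGraph 7 where
  cls := ![1,1,2,2,0,0,0]
  adj := mkAdj ![1,1,2,2,0,0,0] [(1,2),(0,5),(0,6),(3,4),(3,5)]
  symm := by decide
  tripart := by decide

lemma H7cyc_class0 : classSet H7cyc 0 = {4,5,6} := by decide
lemma H7cyc_class1 : classSet H7cyc 1 = {0,1} := by decide
lemma H7cyc_class2 : classSet H7cyc 2 = {2,3} := by decide

lemma triDensity_nonneg {n : ℕ} (G : TriGraph n) (W : Weighting G) :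
    0 ≤ triDensity G W.w := by
  unfold triDensity
  refine Finset.sum_nonneg fun a _ => Finset.sum_nonneg fun b _ => Finset.sum_nonneg fun c _ => ?_
  split_ifs
  · exact mul_nonneg (mul_nonneg (W.nonneg a) (W.nonneg b)) (W.nonneg c)
  · exact le_rfl

lemma Tmin_le {n : ℕ} {G : TriGraph n} {W : Weighting G} {α β γ : ℝ} (h : InTri G W α β γ) :
    Tmin α β γ ≤ triDensity G W.w := by
  refine csInf_le ⟨0, ?_⟩ ⟨n, G, W, h, rfl⟩
  rintro _ ⟨m, H, V, -, rfl⟩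
  exact triDensity_nonneg H V

/-- If all of `A` has the same neighbourhood in `C`, the triangle density is at least
`α + βγ - 1`. -/
lemma le_triDensity_of_common_nbr {α β γ : ℝ} {n : ℕ} (G : TriGraph n) (W : Weighting G)
    (hW : InTri G W α β γ)
    (hnbr : ∀ a₁ a₂ : Fin n, G.cls a₁ = 0 → G.cls a₂ = 0 →
      ∀ c : Fin n, G.cls c = 2 → G.adj a₁ c = G.adj a₂ c) :
    α + β * γ - 1 ≤ triDensity G W.w := by
  obtain ⟨hα, hβ, hγ⟩ := hW
  obtain ⟨a₀, ha₀⟩ : (classSet G 0).Nonempty := by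
    by_contra hne
    have h1 := W.sum_one 0
    rw [Finset.not_nonempty_iff_eq_empty.mp hne] at h1
    simp at h1
  have hcls : ∀ {i : Fin 3} {v : Fin n}, v ∈ classSet G i → G.cls v = i := by
    intro i v hv
    simpa [classSet] using hv
  set A := classSet G 0 with hA
  set B := classSet G 1 with hB
  set C := classSet G 2 with hC
  set w := W.w with hw
  have sA : ∑ a ∈ A, w a = 1 := W.sum_one 0
  have sB : ∑ b ∈ B, w b = 1 := W.sum_one 1
  have sC : ∑ c ∈ C, w c = 1 := W.sum_one 2
  let E : Fin n → Fin n → ℝ := fun u v => if G.adj u v then 1 else 0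
  let N : Fin n → ℝ := fun c => if G.adj a₀ c then 1 else 0
  have hβ' : β = ∑ c ∈ C, w c * N c := by
    rw [← hβ, ← one_mul (∑ c ∈ C, w c * N c), ← sA, Finset.sum_mul]
    refine Finset.sum_congr rfl fun a ha => ?_
    rw [Finset.mul_sum]
    refine Finset.sum_congr rfl fun c hc => ?_
    rw [hnbr a a₀ (hcls ha) (hcls ha₀) c (hcls hc)]
    simp only [N]
    split_ifs <;> ring
  have hγ' : γ = ∑ a ∈ A, ∑ b ∈ B, w a * w b * E a b := by
    rw [← hγ]
    refine Finset.sum_congr rfl fun a _ => Finset.sum_congr rfl fun b _ => ?_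
    simp only [E]
    split_ifs <;> ring
  have hα' : ∑ a ∈ A, ∑ b ∈ B, ∑ c ∈ C, w a * w b * w c * E b c = α := by
    rw [← hα, ← one_mul (edgeDensity G w 1 2), ← sA, Finset.sum_mul]
    refine Finset.sum_congr rfl fun a _ => ?_
    rw [edgeDensity, Finset.mul_sum]
    refine Finset.sum_congr rfl fun b _ => ?_
    rw [Finset.mul_sum]
    refine Finset.sum_congr rfl fun c _ => ?_
    simp only [E]
    split_ifs <;> ring
  have hβγ : ∑ a ∈ A, ∑ b ∈ B, ∑ c ∈ C, w a * w b * w c * (N c * E a b) = β * γ := by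
    rw [mul_comm β, hβ', hγ', Finset.sum_mul]
    refine Finset.sum_congr rfl fun a _ => ?_
    rw [Finset.sum_mul]
    refine Finset.sum_congr rfl fun b _ => ?_
    rw [Finset.mul_sum]
    refine Finset.sum_congr rfl fun c _ => ?_
    ring
  have hone : ∑ a ∈ A, ∑ b ∈ B, ∑ c ∈ C, w a * w b * w c = 1 := by
    simp only [← Finset.mul_sum, sA, sB, sC, mul_one]
  have ht : ∑ a ∈ A, ∑ b ∈ B, ∑ c ∈ C, w a * w b * w c * (E a b * N c * E b c)
      = triDensity G w := by
    refine Finset.sum_congr rfl fun a ha => Finset.sum_congr rfl fun b _ =>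
      Finset.sum_congr rfl fun c hc => ?_
    rw [hnbr a a₀ (hcls ha) (hcls ha₀) c (hcls hc)]
    simp only [E, N]
    cases G.adj a b <;> cases G.adj a₀ c <;> cases G.adj b c <;> simp
  have key : 0 ≤ ∑ a ∈ A, ∑ b ∈ B, ∑ c ∈ C,
      (w a * w b * w c * (E a b * N c * E b c) - w a * w b * w c * E b c
        - w a * w b * w c * (N c * E a b) + w a * w b * w c) := by
    refine Finset.sum_nonneg fun a _ => Finset.sum_nonneg fun b _ => Finset.sum_nonneg fun c _ => ?_
    have h3 : 0 ≤ w a * w b * w c := mul_nonneg (mul_nonneg (W.nonneg a) (W.nonneg b)) (W.nonneg c)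
    simp only [E, N]
    cases G.adj a b <;> cases G.adj a₀ c <;> cases G.adj b c <;> simp [h3]
  simp only [Finset.sum_add_distrib, Finset.sum_sub_distrib] at key
  rw [ht, hα', hβγ, hone] at key
  linarith

/-- In `R₂` the relabelled `H₇` has a weighting with densities `α, β, γ` whose triangle density
is `2(α - 1 + √(βγ(1 - α)))`. With `s = √(βγ(1 - α))`, the weights `1 - s/β` of the first vertex of
`B` and `1 - s/γ` of the second vertex of `C` minimise the triangle density among the weightings
of this graph with the given edge densities. -/
lemma exists_H7_weighting {α β γ : ℝ} (h : inR2 α β γ) :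
    ∃ W : Weighting H7cyc, InTri H7cyc W α β γ ∧
      triDensity H7cyc W.w = 2 * (α - 1 + √(β * γ * (1 - α))) := by
  obtain ⟨⟨⟨⟨hα0, hα1⟩, ⟨hβ0, hβ1⟩, ⟨hγ0, hγ1⟩⟩, h1, h2, h3⟩, hΔ⟩ := h
  have hβ : 0 < β := by nlinarith
  have hγ : 0 < γ := by nlinarith
  have hα : 0 < α := by nlinarith
  have hp : 0 ≤ β * γ * (1 - α) := mul_nonneg (by positivity) (by linarith)
  set s := √(β * γ * (1 - α)) with hs
  have hs0 : 0 ≤ s := Real.sqrt_nonneg _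
  have hs2 : s ^ 2 = β * γ * (1 - α) := Real.sq_sqrt hp
  have hsbg : s < β * γ := by
    refine lt_of_pow_lt_pow_left₀ 2 (by positivity) ?_
    have : β * γ * (1 - α) < β * γ * (β * γ) := mul_lt_mul_of_pos_left (by linarith) (by positivity)
    nlinarith
  have hov : 0 ≤ α - β - γ + 2 * s := by
    have h4 : β + γ - α ≤ 2 * s := by
      refine abs_le_of_sq_le_sq' ?_ (by positivity) |>.2
      unfold Delta at hΔ
      nlinarith
    linarith
  obtain ⟨x, hx⟩ : ∃ x, x = 1 - s / β := ⟨_, rfl⟩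
  obtain ⟨y, hy⟩ : ∃ y, y = 1 - s / γ := ⟨_, rfl⟩
  have hxγ : 1 - γ < x := by
    rw [hx]
    have : s / β < γ := by rw [div_lt_iff₀ hβ]; linarith
    linarith
  have hyβ : 1 - β < y := by
    rw [hy]
    have : s / γ < β := by rw [div_lt_iff₀ hγ]; linarith
    linarith
  have hx0 : 0 < x := by linarith
  have hy0 : 0 < y := by linarith
  have hx1 : x ≤ 1 := by rw [hx]; linarith [div_nonneg hs0 hβ.le]
  have hy1 : y ≤ 1 := by rw [hy]; linarith [div_nonneg hs0 hγ.le]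
  have hβx : β * x = β - s := by rw [hx]; field_simp
  have hγy : γ * y = γ - s := by rw [hy]; field_simp
  have hxy : (1 - x) * (1 - y) = 1 - α := by
    have : (1 - x) * (1 - y) = s ^ 2 / (β * γ) := by rw [hx, hy]; field_simp; ring
    rw [this, hs2]
    field_simp
  obtain ⟨a₂, ha₂⟩ : ∃ a₂, a₂ = (1 - γ) / x + (1 - β) / y - 1 := ⟨_, rfl⟩
  have hxya : x * y * a₂ = α - β - γ + 2 * s := by
    have : x * y * a₂ = (1 - γ) * y + (1 - β) * x - x * y := by rw [ha₂]; field_simp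
    rw [this]; linarith
  have ha₂0 : 0 ≤ a₂ := by
    by_contra hneg
    have := mul_pos (mul_pos hx0 hy0) (neg_pos.mpr (not_le.mp hneg))
    linarith
  obtain ⟨a₁, ha₁⟩ : ∃ a₁, a₁ = 1 - (1 - γ) / x := ⟨_, rfl⟩
  obtain ⟨a₃, ha₃⟩ : ∃ a₃, a₃ = 1 - (1 - β) / y := ⟨_, rfl⟩
  have ha₁0 : 0 ≤ a₁ := by
    have : (1 - γ) / x ≤ 1 := by rw [div_le_one hx0]; linarith
    linarith
  have ha₃0 : 0 ≤ a₃ := by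
    have : (1 - β) / y ≤ 1 := by rw [div_le_one hy0]; linarith
    linarith
  have hsum : a₁ + a₂ + a₃ = 1 := by linarith
  -- the non-edge densities between `A`, `B` and between `A`, `C`
  have hab : x * (1 - a₁) = 1 - γ := by rw [ha₁]; field_simp; ring
  have hac : y * (1 - a₃) = 1 - β := by rw [ha₃]; field_simp; ring
  let W : Weighting H7cyc :=
    { w := ![x, 1 - x, 1 - y, y, a₁, a₂, a₃]
      nonneg := by
        intro v
        fin_cases v <;> simp <;> linarith
      le_one := by
        intro v
        fin_cases v <;> simp <;> linarith
      sum_one := by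
        intro i
        fin_cases i
        · change ∑ v ∈ classSet H7cyc 0, _ = _
          simp [H7cyc_class0]; linarith
        · change ∑ v ∈ classSet H7cyc 1, _ = _
          simp [H7cyc_class1]
        · change ∑ v ∈ classSet H7cyc 2, _ = _
          simp [H7cyc_class2] }
  have e1 : edgeDensity H7cyc W.w 1 2 = α := by
    simp only [edgeDensity, H7cyc_class1, H7cyc_class2]
    simp [W, H7cyc, mkAdj]
    linear_combination -hxy
  have e2 : edgeDensity H7cyc W.w 0 2 = β := by
    simp only [edgeDensity, H7cyc_class0, H7cyc_class2]
    simp [W, H7cyc, mkAdj]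
    linear_combination (1 - y) * hsum - hac
  have e3 : edgeDensity H7cyc W.w 0 1 = γ := by
    simp only [edgeDensity, H7cyc_class0, H7cyc_class1]
    simp [W, H7cyc, mkAdj]
    linear_combination (1 - x) * hsum - hab
  refine ⟨W, ⟨e1, e2, e3⟩, ?_⟩
  simp only [triDensity, H7cyc_class0, H7cyc_class1, H7cyc_class2]
  simp [W, H7cyc, mkAdj]
  linear_combination hxya - x * y * hsum - hxy - hab - hac

/-- If (α,β,γ) ∈ R₂, (G,w) ∈ Tri(α,β,γ), and all vertices of class A
have the same neighbourhood in class C, then (G,w) is not extremal. -/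
theorem stmt16 (α β γ : ℝ) (h : inR2 α β γ) {n : ℕ} (G : TriGraph n) (W : Weighting G)
    (hW : InTri G W α β γ)
    (hnbr : ∀ a₁ a₂ : Fin n, G.cls a₁ = 0 → G.cls a₂ = 0 →
      ∀ c : Fin n, G.cls c = 2 → G.adj a₁ c = G.adj a₂ c) :
    ¬ Extremal G W α β γ := by
  rintro ⟨-, hext⟩
  obtain ⟨W', hW', ht'⟩ := exists_H7_weighting h
  have hlow := le_triDensity_of_common_nbr G W hW hnbr
  have hup := Tmin_le hW'
  obtain ⟨⟨⟨⟨-, hα1⟩, ⟨hβ0, -⟩, ⟨hγ0, -⟩⟩, -, -, h3⟩, -⟩ := h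
  have hlt : √(1 - α) < √(β * γ) := Real.sqrt_lt_sqrt (by linarith) (by linarith)
  have hsq : 0 < (√(β * γ) - √(1 - α)) ^ 2 := pow_pos (sub_pos.mpr hlt) 2
  have hs : √(β * γ * (1 - α)) = √(β * γ) * √(1 - α) := Real.sqrt_mul (mul_nonneg hβ0 hγ0) _
  have h4 := Real.sq_sqrt (mul_nonneg hβ0 hγ0)
  have h5 := Real.sq_sqrt (sub_nonneg.mpr hα1)
  rw [ht', hs] at hup
  rw [hext] at hlow
  nlinarith
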